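/- Weighted comparison of unit normals (used in the recovery-sequence estimate): Let ω ⊆ ℝ² be a bounded open set, let ψ_A, ψ, φ : ℝ² → ℝ³ be continuously differentiable on an open neighborhood of the closure of ω, suppose (∇ψ(y))ᵀ∇ψ(y) = (∇ψ_A(y))ᵀ∇ψ_A(y) =: g_A(y) for all y ∈ ω, and suppose ∂₁ψ_A × ∂₂ψ_A ≠ 0 and ∂₁φ × ∂₂φ ≠ 0 on the closure of ω. Then ∫_ω √(det g_A(y)) ‖n[ψ](y) − n[φ](y)‖² dy ≤ 4 ∫_ω ‖∂₁φ(y) × ∂₂φ(y) − ∂₁ψ(y) × ∂₂ψ(y)‖ dy. -/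

import Mathlib

open Matrix MeasureTheory

noncomputable section

/-- `i`-th partial derivative of `ψ : ℝ² → ℝ³` at `x`. -/
def pd (ψ : (Fin 2 → ℝ) → (Fin 3 → ℝ)) (i : Fin 2) (x : Fin 2 → ℝ) : Fin 3 → ℝ :=
  fderiv ℝ ψ x (Pi.single i 1)

/-- Jacobian matrix `∇ψ(x) ∈ ℝ^{3×2}`. -/
def jac (ψ : (Fin 2 → ℝ) → (Fin 3 → ℝ)) (x : Fin 2 → ℝ) : Matrix (Fin 3) (Fin 2) ℝ :=
  Matrix.of fun m i => pd ψ i x m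

/-- First fundamental form `g[ψ](x) = (∇ψ(x))ᵀ ∇ψ(x)`. -/
def met (ψ : (Fin 2 → ℝ) → (Fin 3 → ℝ)) (x : Fin 2 → ℝ) : Matrix (Fin 2) (Fin 2) ℝ :=
  (jac ψ x)ᵀ * jac ψ x

/-- Euclidean inner product on `ℝ³`. -/
def dot3 (u v : Fin 3 → ℝ) : ℝ := ∑ m, u m * v m

/-- Euclidean norm on `ℝ³`. -/
def norm3 (u : Fin 3 → ℝ) : ℝ := Real.sqrt (dot3 u u)

/-- Cross product `∂₁ψ(x) × ∂₂ψ(x)`. -/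
def crossPsi (ψ : (Fin 2 → ℝ) → (Fin 3 → ℝ)) (x : Fin 2 → ℝ) : Fin 3 → ℝ :=
  crossProduct (pd ψ 0 x) (pd ψ 1 x)

/-- Unit normal `n[ψ](x)`. -/
def nrm (ψ : (Fin 2 → ℝ) → (Fin 3 → ℝ)) (x : Fin 2 → ℝ) : Fin 3 → ℝ :=
  (norm3 (crossPsi ψ x))⁻¹ • crossPsi ψ x

/-- Second partial derivative `∂ᵢ∂ⱼψ(x)`. -/
def pd2 (ψ : (Fin 2 → ℝ) → (Fin 3 → ℝ)) (i j : Fin 2) (x : Fin 2 → ℝ) : Fin 3 → ℝ :=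
  pd (pd ψ j) i x

/-- Hessian `D²ψᵐ(x)` of the `m`-th component. -/
def hess (ψ : (Fin 2 → ℝ) → (Fin 3 → ℝ)) (m : Fin 3) (x : Fin 2 → ℝ) :
    Matrix (Fin 2) (Fin 2) ℝ :=
  Matrix.of fun i j => pd2 ψ i j x m

/-- Second fundamental form `II[ψ](x)ᵢⱼ = ∂ᵢ∂ⱼψ(x)·n[ψ](x)`. -/
def sff (ψ : (Fin 2 → ℝ) → (Fin 3 → ℝ)) (x : Fin 2 → ℝ) : Matrix (Fin 2) (Fin 2) ℝ :=
  Matrix.of fun i j => dot3 (pd2 ψ i j x) (nrm ψ x)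

/-- Frobenius inner product `A : B`. -/
def frob {n : Type*} [Fintype n] (A B : Matrix n n ℝ) : ℝ := ∑ i, ∑ j, A i j * B i j

/-- Gram–Schmidt frame vector `y¹[ψ](x)`. -/
def y1 (ψ : (Fin 2 → ℝ) → (Fin 3 → ℝ)) (x : Fin 2 → ℝ) : Fin 3 → ℝ :=
  (norm3 (pd ψ 0 x))⁻¹ • pd ψ 0 x

/-- Gram–Schmidt vector `ŷ²[ψ](x)` (before normalization). -/
def yhat2 (ψ : (Fin 2 → ℝ) → (Fin 3 → ℝ)) (x : Fin 2 → ℝ) : Fin 3 → ℝ :=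
  pd ψ 1 x - (dot3 (pd ψ 1 x) (y1 ψ x)) • y1 ψ x

/-- Gram–Schmidt frame vector `y²[ψ](x)`. -/
def y2 (ψ : (Fin 2 → ℝ) → (Fin 3 → ℝ)) (x : Fin 2 → ℝ) : Fin 3 → ℝ :=
  (norm3 (yhat2 ψ x))⁻¹ • yhat2 ψ x

lemma norm3_eq (u : Fin 3 → ℝ) : norm3 u = ‖WithLp.toLp 2 u‖ := by
  rw [EuclideanSpace.norm_eq]
  simp [norm3, dot3, pow_two]

lemma ptwise {E : Type*} [NormedAddCommGroup E] [NormedSpace ℝ E] (a b : E) (hb : b ≠ 0) :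
    ‖a‖ * ‖‖a‖⁻¹ • a - ‖b‖⁻¹ • b‖ ^ 2 ≤ 4 * ‖b - a‖ := by
  by_cases ha : a = 0
  · simp [ha]
  have ha' : ‖a‖ ≠ 0 := norm_ne_zero_iff.2 ha
  have hb' : ‖b‖ ≠ 0 := norm_ne_zero_iff.2 hb
  have h1 : ‖‖a‖⁻¹ • a - ‖b‖⁻¹ • b‖ ≤ 2 := by
    refine (norm_sub_le _ _).trans ?_
    simp only [norm_smul, norm_inv, norm_norm, inv_mul_cancel₀ ha', inv_mul_cancel₀ hb']
    norm_num
  have h2 : ‖a‖ * ‖‖a‖⁻¹ • a - ‖b‖⁻¹ • b‖ ≤ 2 * ‖b - a‖ := by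
    have e : ‖a‖ * ‖‖a‖⁻¹ • a - ‖b‖⁻¹ • b‖ = ‖(a - b) + ((‖b‖ - ‖a‖) * ‖b‖⁻¹) • b‖ := by
      have : ‖a‖ * ‖‖a‖⁻¹ • a - ‖b‖⁻¹ • b‖ = ‖‖a‖ • (‖a‖⁻¹ • a - ‖b‖⁻¹ • b)‖ := by
        rw [norm_smul, norm_norm]
      rw [this, smul_sub, smul_smul, smul_smul, mul_inv_cancel₀ ha', one_smul, sub_mul, sub_smul,
        mul_inv_cancel₀ hb', one_smul]
      congr 1
      abel
    rw [e]
    refine (norm_add_le _ _).trans ?_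
    rw [norm_smul, norm_mul, norm_inv, norm_norm, mul_assoc, inv_mul_cancel₀ hb', mul_one,
      Real.norm_eq_abs, norm_sub_rev a b]
    linarith [abs_norm_sub_norm_le b a]
  nlinarith [norm_nonneg (‖a‖⁻¹ • a - ‖b‖⁻¹ • b), norm_nonneg (b - a),
    mul_le_mul h2 h1 (norm_nonneg _) (by positivity)]

lemma sqrt_det_met (ψ : (Fin 2 → ℝ) → (Fin 3 → ℝ)) (x : Fin 2 → ℝ) :
    Real.sqrt (met ψ x).det = norm3 (crossPsi ψ x) := by
  unfold norm3
  congr 1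
  simp [met, jac, dot3, crossPsi, Matrix.det_fin_two, Matrix.mul_apply, Fin.sum_univ_three,
    cross_apply]
  ring

lemma pd_cont {U : Set (Fin 2 → ℝ)} (hU : IsOpen U) {ψ : (Fin 2 → ℝ) → (Fin 3 → ℝ)}
    (hψ : ContDiffOn ℝ 1 ψ U) (i : Fin 2) : ContinuousOn (pd ψ i) U :=
  (hψ.continuousOn_fderiv_of_isOpen hU le_rfl).clm_apply continuousOn_const

lemma cross_cont {U : Set (Fin 2 → ℝ)} (hU : IsOpen U) {ψ : (Fin 2 → ℝ) → (Fin 3 → ℝ)}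
    (hψ : ContDiffOn ℝ 1 ψ U) : ContinuousOn (crossPsi ψ) U := by
  have h := fun i j => continuousOn_pi.1 (pd_cont hU hψ i) j
  unfold crossPsi
  simp only [cross_apply]
  refine continuousOn_pi.2 fun k => ?_
  fin_cases k
  · exact ((h 0 1).mul (h 1 2)).sub ((h 0 2).mul (h 1 1))
  · exact ((h 0 2).mul (h 1 0)).sub ((h 0 0).mul (h 1 2))
  · exact ((h 0 0).mul (h 1 1)).sub ((h 0 1).mul (h 1 0))

/-- Weighted comparison of unit normals (recovery-sequence
estimate):
`∫_ω √(det g_A) ‖n[ψ] − n[φ]‖² ≤ 4 ∫_ω ‖∂₁φ × ∂₂φ − ∂₁ψ × ∂₂ψ‖`. -/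
theorem weighted_normal_comparison
    (ω U : Set (Fin 2 → ℝ)) (hωo : IsOpen ω) (hωb : Bornology.IsBounded ω)
    (hU : IsOpen U) (hcl : closure ω ⊆ U)
    (ψA ψ φ : (Fin 2 → ℝ) → (Fin 3 → ℝ))
    (hA : ContDiffOn ℝ 1 ψA U) (hψ : ContDiffOn ℝ 1 ψ U)
    (hφ : ContDiffOn ℝ 1 φ U)
    (hmet : ∀ y ∈ ω, met ψ y = met ψA y)
    (hcA : ∀ y ∈ closure ω, crossPsi ψA y ≠ 0)
    (hcφ : ∀ y ∈ closure ω, crossPsi φ y ≠ 0) :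
    ∫ y in ω, Real.sqrt (met ψA y).det * norm3 (nrm ψ y - nrm φ y) ^ 2
      ≤ 4 * ∫ y in ω, norm3 (crossPsi φ y - crossPsi ψ y) := by
  have hc : ContinuousOn (fun y => norm3 (crossPsi φ y - crossPsi ψ y)) (closure ω) := by
    have h : ContinuousOn (fun y => crossPsi φ y - crossPsi ψ y) (closure ω) :=
      ((cross_cont hU hφ).sub (cross_cont hU hψ)).mono hcl
    have hn : Continuous norm3 := by
      unfold norm3 dot3
      fun_prop
    exact hn.comp_continuousOn h
  have hi : IntegrableOn (fun y => norm3 (crossPsi φ y - crossPsi ψ y)) ω :=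
    (hc.integrableOn_compact hωb.isCompact_closure).mono_set subset_closure
  rw [← integral_const_mul]
  refine integral_mono_of_nonneg (Filter.Eventually.of_forall fun y => ?_) (hi.const_mul 4) ?_
  · exact mul_nonneg (Real.sqrt_nonneg _) (sq_nonneg _)
  · refine (ae_restrict_mem hωo.measurableSet).mono fun y hy => ?_
    have hb : WithLp.toLp 2 (crossPsi φ y) ≠ 0 := by
      intro h
      exact hcφ y (subset_closure hy) (by simpa using h)
    have := ptwise (WithLp.toLp 2 (crossPsi ψ y)) (WithLp.toLp 2 (crossPsi φ y)) hb
    simp only [← hmet y hy, sqrt_det_met, nrm, norm3_eq]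
    simpa only [WithLp.toLp_sub, WithLp.toLp_smul] using this

end
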